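/- Let γ : ℝ → ℝ² be a smooth regular plane curve parametrised by arc length with curvature κ, which is proper (the preimage of every compact subset of ℝ² is compact), and let S ∈ ℝ satisfy −κ''(s) = 2S ⟨γ'(s), γ(s)⟩ for all s. Suppose lim_{ρ→∞} ( ρ^{-2} ∫_{γ^{-1}(B_ρ(0))} κ(s)² ds + |S| ρ^{-1} ∫_{γ^{-1}(B_{2ρ}(0))} |⟨ν(s), γ(s)⟩| ds ) = 0, where B_ρ(0) is the closed ball of radius ρ centred at the origin in ℝ². Then γ is a straight line: γ(s) = γ(0) + s γ'(0) for all s. -/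

import Mathlib

open Real MeasureTheory Filter

/-- Euclidean inner product on `ℝ × ℝ`. -/
def innerP (a b : ℝ × ℝ) : ℝ := a.1 * b.1 + a.2 * b.2

/-- Unit normal `ν = (y', -x')` of a plane curve parametrised by arc length. -/
noncomputable def nuA (γ : ℝ → ℝ × ℝ) (s : ℝ) : ℝ × ℝ :=
  ((deriv γ s).2, -(deriv γ s).1)

/-- Curvature `κ = ⟨γ'', ν⟩` of a plane curve parametrised by arc length. -/
noncomputable def curvA (γ : ℝ → ℝ × ℝ) (s : ℝ) : ℝ :=
  innerP (deriv (deriv γ) s) (nuA γ s)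

/-- The closed Euclidean ball of radius `ρ` centred at the origin in `ℝ × ℝ`. -/
def euclBall (ρ : ℝ) : Set (ℝ × ℝ) := {p : ℝ × ℝ | Real.sqrt (p.1 ^ 2 + p.2 ^ 2) ≤ ρ}

/-!
Integrating the rotator equation once gives `κ' = c - S |γ|²`. Suppose `|γ| → ∞` at the end
`s → ∞`. Then, unless `κ` vanishes identically, `|κ|` is eventually positive and nondecreasing
along this end. But a curve whose curvature is positive and nondecreasing never leaves its
osculating disc (Kneser's nesting theorem), because the evolute `γ + ν / κ` has speed `|(1 / κ)'|`.
It is therefore bounded, a contradiction. Hence `κ = 0` and `γ` is a line.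
-/

section NormalCurvature

variable {E : Type*} [NormedAddCommGroup E] [NormedSpace ℝ E] {γ ν : ℝ → E} {κ : ℝ → ℝ}

/-- The curve of centres of curvature of `γ`, for the unit normal `ν` and the curvature `κ`.
At zeros of `κ` it takes the junk value `γ s`. -/
noncomputable def evolute (γ ν : ℝ → E) (κ : ℝ → ℝ) (s : ℝ) : E := γ s + (κ s)⁻¹ • ν s

/-- The Weingarten equation `ν' = -κ γ'` for a curve with normal field `ν` and curvature `κ`. It is
invariant under `(ν, κ) ↦ (-ν, -κ)`. The normal is normalised by `‖ν‖ ≤ 1`, which covers Euclidean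
unit normals measured in the supremum norm of `ℝ × ℝ`. -/
structure HasNormalCurvature (γ ν : ℝ → E) (κ : ℝ → ℝ) : Prop where
  differentiable : Differentiable ℝ γ
  differentiable_curvature : Differentiable ℝ κ
  norm_normal_le_one : ∀ s, ‖ν s‖ ≤ 1
  hasDerivAt_normal : ∀ s, HasDerivAt ν (-κ s • deriv γ s) s

namespace HasNormalCurvature

lemma neg (h : HasNormalCurvature γ ν κ) : HasNormalCurvature γ (-ν) (-κ) where
  differentiable := h.differentiable
  differentiable_curvature := h.differentiable_curvature.neg
  norm_normal_le_one s := by simpa using h.norm_normal_le_one s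
  hasDerivAt_normal s := by simpa using (h.hasDerivAt_normal s).neg

lemma hasDerivAt_evolute (h : HasNormalCurvature γ ν κ) {s : ℝ} (hs : κ s ≠ 0) :
    HasDerivAt (evolute γ ν κ) (-(deriv κ s / κ s ^ 2) • ν s) s := by
  have hinv := (h.differentiable_curvature s).hasDerivAt.inv hs
  refine ((h.differentiable s).hasDerivAt.add (hinv.smul (h.hasDerivAt_normal s))).congr_deriv ?_
  rw [Pi.inv_apply, smul_smul, mul_neg, inv_mul_cancel₀ hs, neg_one_smul, neg_div]
  abel

lemma dist_evolute_le_sub_inv (h : HasNormalCurvature γ ν κ) {a b : ℝ} (hab : a ≤ b)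
    (hpos : ∀ s ∈ Set.Icc a b, 0 < κ s) (hmono : ∀ s ∈ Set.Icc a b, 0 ≤ deriv κ s) :
    dist (evolute γ ν κ b) (evolute γ ν κ a) ≤ (κ a)⁻¹ - (κ b)⁻¹ := by
  have hevolute : ∀ s ∈ Set.Icc a b, HasDerivAt (fun t => evolute γ ν κ t - evolute γ ν κ a)
      (-(deriv κ s / κ s ^ 2) • ν s) s :=
    fun s hs => (h.hasDerivAt_evolute (hpos s hs).ne').sub_const _
  have hradius : ∀ s ∈ Set.Icc a b, HasDerivAt (fun t => (κ a)⁻¹ - (κ t)⁻¹)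
      (deriv κ s / κ s ^ 2) s := fun s hs =>
    (((h.differentiable_curvature s).hasDerivAt.inv (hpos s hs).ne').const_sub _).congr_deriv
      (by ring)
  have hspeed : ∀ s ∈ Set.Icc a b, ‖-(deriv κ s / κ s ^ 2) • ν s‖ ≤ deriv κ s / κ s ^ 2 := by
    intro s hs
    have hnonneg : 0 ≤ deriv κ s / κ s ^ 2 := div_nonneg (hmono s hs) (sq_nonneg _)
    rw [norm_smul, norm_neg, Real.norm_of_nonneg hnonneg]
    exact mul_le_of_le_one_right hnonneg (h.norm_normal_le_one s)
  rw [dist_eq_norm]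
  exact image_norm_le_of_norm_deriv_right_le_deriv_boundary'
    (fun s hs => (hevolute s hs).continuousAt.continuousWithinAt)
    (fun s hs => (hevolute s (Set.Ico_subset_Icc_self hs)).hasDerivWithinAt) (by simp)
    (fun s hs => (hradius s hs).continuousAt.continuousWithinAt)
    (fun s hs => (hradius s (Set.Ico_subset_Icc_self hs)).hasDerivWithinAt)
    (fun s hs => hspeed s (Set.Ico_subset_Icc_self hs)) (Set.right_mem_Icc.2 hab)

lemma dist_evolute_le_inv (h : HasNormalCurvature γ ν κ) {a b : ℝ} (hab : a ≤ b) (ha : 0 < κ a)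
    (hmono : ∀ s ∈ Set.Icc a b, 0 ≤ deriv κ s) :
    dist (γ b) (evolute γ ν κ a) ≤ (κ a)⁻¹ := by
  have hκ : MonotoneOn κ (Set.Icc a b) :=
    monotoneOn_of_deriv_nonneg (convex_Icc a b) h.differentiable_curvature.continuous.continuousOn
      h.differentiable_curvature.differentiableOn fun s hs => hmono s (interior_subset hs)
  have hpos : ∀ s ∈ Set.Icc a b, 0 < κ s := fun s hs =>
    ha.trans_le (hκ (Set.left_mem_Icc.2 hab) hs hs.1)
  have hb : 0 < κ b := hpos b (Set.right_mem_Icc.2 hab)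
  have hradius : dist (γ b) (evolute γ ν κ b) ≤ (κ b)⁻¹ := by
    rw [evolute, dist_self_add_right, norm_smul, Real.norm_of_nonneg (inv_nonneg.2 hb.le)]
    exact mul_le_of_le_one_right (inv_nonneg.2 hb.le) (h.norm_normal_le_one b)
  calc dist (γ b) (evolute γ ν κ a)
      ≤ dist (γ b) (evolute γ ν κ b) + dist (evolute γ ν κ b) (evolute γ ν κ a) :=
        dist_triangle _ _ _
    _ ≤ (κ b)⁻¹ + ((κ a)⁻¹ - (κ b)⁻¹) :=
        add_le_add hradius (h.dist_evolute_le_sub_inv hab hpos hmono)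
    _ = (κ a)⁻¹ := by ring

lemma curvature_nonpos_of_deriv_nonneg (h : HasNormalCurvature γ ν κ)
    (hγ : Tendsto γ atTop (Bornology.cobounded E)) {a : ℝ} (hmono : ∀ s ≥ a, 0 ≤ deriv κ s) :
    κ a ≤ 0 := by
  by_contra! ha
  have hfar : ∀ᶠ s in atTop, γ s ∉ Metric.closedBall (evolute γ ν κ a) (κ a)⁻¹ :=
    hγ.eventually (Bornology.isBounded_def.1 Metric.isBounded_closedBall)
  obtain ⟨s, hs, has⟩ := (hfar.and (eventually_ge_atTop a)).exists
  exact hs (h.dist_evolute_le_inv has ha fun t ht => hmono t ht.1)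

lemma not_eventually_le_deriv_curvature (h : HasNormalCurvature γ ν κ)
    (hγ : Tendsto γ atTop (Bornology.cobounded E)) {δ : ℝ} (hδ : 0 < δ) :
    ¬ ∀ᶠ s in atTop, δ ≤ deriv κ s := by
  intro hderiv
  obtain ⟨a, ha⟩ := eventually_atTop.1 hderiv
  have hgrowth : ∀ s ≥ a, δ * (s - a) ≤ κ s - κ a := fun s hs =>
    (convex_Ici a).mul_sub_le_image_sub_of_le_deriv
      h.differentiable_curvature.continuous.continuousOn
      h.differentiable_curvature.differentiableOn
      (fun t ht => ha t (interior_subset ht)) a Set.self_mem_Ici s hs hs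
  have hnonpos : ∀ s ≥ a, κ s ≤ 0 := fun s hs =>
    h.curvature_nonpos_of_deriv_nonneg hγ fun t ht => hδ.le.trans (ha t (hs.trans ht))
  have hunbounded : Tendsto (fun s => δ * (s - a)) atTop atTop :=
    (tendsto_atTop_add_const_right _ (-a) tendsto_id).const_mul_atTop hδ
  obtain ⟨s, hs, has⟩ :=
    ((hunbounded.eventually_gt_atTop (-κ a)).and (eventually_ge_atTop a)).exists
  linarith [hgrowth s has, hnonpos s has]

variable {r : ℝ → ℝ} {c S : ℝ}

lemma coeff_nonneg_of_deriv_curvature_eq (h : HasNormalCurvature γ ν κ)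
    (hγ : Tendsto γ atTop (Bornology.cobounded E)) (hr : Tendsto r atTop atTop)
    (hκ : ∀ s, deriv κ s = c - S * r s) : 0 ≤ S := by
  by_contra! hS
  have hκ_top : Tendsto (deriv κ) atTop atTop := by
    simp only [funext hκ, sub_eq_add_neg, ← neg_mul]
    exact tendsto_atTop_add_const_left _ c (hr.const_mul_atTop (neg_pos.2 hS))
  exact h.not_eventually_le_deriv_curvature hγ one_pos (hκ_top.eventually_ge_atTop 1)

theorem curvature_eq_zero_of_deriv_eq (h : HasNormalCurvature γ ν κ)
    (hγ : Tendsto γ atTop (Bornology.cobounded E)) (hr : Tendsto r atTop atTop)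
    (hκ : ∀ s, deriv κ s = c - S * r s) (s : ℝ) : κ s = 0 := by
  have hκ_neg : ∀ t, deriv (-κ) t = -c - -S * r t := fun t => by
    rw [deriv.neg, hκ]
    ring
  have hS : S = 0 := le_antisymm
    (neg_nonneg.1 (h.neg.coeff_nonneg_of_deriv_curvature_eq hγ hr hκ_neg))
    (h.coeff_nonneg_of_deriv_curvature_eq hγ hr hκ)
  simp only [hS, neg_zero, zero_mul, sub_zero] at hκ hκ_neg
  have hc : c = 0 := le_antisymm
    (not_lt.1 fun hc =>
      h.not_eventually_le_deriv_curvature hγ hc (.of_forall fun t => (hκ t).ge))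
    (not_lt.1 fun hc => h.neg.not_eventually_le_deriv_curvature hγ (neg_pos.2 hc)
      (.of_forall fun t => (hκ_neg t).ge))
  exact le_antisymm (h.curvature_nonpos_of_deriv_nonneg hγ fun t _ => by simp [hκ, hc])
    (neg_nonpos.1 (h.neg.curvature_nonpos_of_deriv_nonneg hγ fun t _ => by simp [hκ_neg, hc]))

end HasNormalCurvature

lemma eq_add_smul_of_deriv_deriv_eq_zero (hγ : Differentiable ℝ γ)
    (hγ' : Differentiable ℝ (deriv γ)) (h : ∀ s, deriv (deriv γ) s = 0) (s : ℝ) :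
    γ s = γ 0 + s • deriv γ 0 := by
  have hderiv : ∀ t, HasDerivAt (fun t => γ t - t • deriv γ 0) 0 t := fun t => by
    refine ((hγ t).hasDerivAt.sub ((hasDerivAt_id t).smul_const (deriv γ 0))).congr_deriv ?_
    rw [is_const_of_deriv_eq_zero hγ' h t 0, one_smul, sub_self]
  have hconst := is_const_of_deriv_eq_zero
    (fun t => (hderiv t).differentiableAt) (fun t => (hderiv t).deriv) s 0
  simpa [sub_eq_iff_eq_add] using hconst

end NormalCurvature

section PlaneCurve

variable {γ : ℝ → ℝ × ℝ}

lemma innerP_comm (a b : ℝ × ℝ) : innerP a b = innerP b a := by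
  simp only [innerP, mul_comm]

lemma norm_sq_le_innerP_self (p : ℝ × ℝ) : ‖p‖ ^ 2 ≤ innerP p p := by
  have h₁ : |p.1| ^ 2 ≤ innerP p p := by
    simp only [innerP, sq_abs]
    nlinarith [sq_nonneg p.2]
  have h₂ : |p.2| ^ 2 ≤ innerP p p := by
    simp only [innerP, sq_abs]
    nlinarith [sq_nonneg p.1]
  rw [Prod.norm_def, Real.norm_eq_abs, Real.norm_eq_abs]
  rcases max_choice |p.1| |p.2| with h | h <;> rwa [h]

lemma tendsto_innerP_self_cobounded_atTop :
    Tendsto (fun p : ℝ × ℝ => innerP p p) (Bornology.cobounded (ℝ × ℝ)) atTop :=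
  tendsto_atTop_mono norm_sq_le_innerP_self
    ((tendsto_pow_atTop two_ne_zero).comp tendsto_norm_cobounded_atTop)

lemma hasDerivAt_innerP {f g : ℝ → ℝ × ℝ} {f' g' : ℝ × ℝ} {s : ℝ} (hf : HasDerivAt f f' s)
    (hg : HasDerivAt g g' s) :
    HasDerivAt (fun t => innerP (f t) (g t)) (innerP f' (g s) + innerP (f s) g') s := by
  have hf₁ : HasDerivAt (fun t => (f t).1) f'.1 s := hf.fst
  have hf₂ : HasDerivAt (fun t => (f t).2) f'.2 s := hf.snd
  refine ((hf₁.mul hg.fst).add (hf₂.mul hg.snd)).congr_deriv ?_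
  simp only [innerP]
  ring

lemma contDiff_curvA {n : WithTop ℕ∞} (hγ : ContDiff ℝ (n + 2) γ) : ContDiff ℝ n (curvA γ) := by
  rw [← one_add_one_eq_two, ← add_assoc] at hγ
  have hγ' : ContDiff ℝ n (deriv γ) := hγ.deriv'.of_le le_self_add
  have hγ'' : ContDiff ℝ n (deriv (deriv γ)) := hγ.deriv'.deriv'
  exact (hγ''.fst.mul hγ'.snd).add (hγ''.snd.mul hγ'.fst.neg)

lemma innerP_deriv_deriv_eq_zero {s : ℝ} (hγ' : DifferentiableAt ℝ (deriv γ) s)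
    (hunit : ∀ t, (deriv γ t).1 ^ 2 + (deriv γ t).2 ^ 2 = 1) :
    innerP (deriv (deriv γ) s) (deriv γ s) = 0 := by
  have hconst : (fun t => innerP (deriv γ t) (deriv γ t)) = fun _ => 1 :=
    funext fun t => by rw [← hunit t, innerP, sq, sq]
  have hderiv := hasDerivAt_innerP hγ'.hasDerivAt hγ'.hasDerivAt
  rw [hconst, innerP_comm (deriv γ s)] at hderiv
  linarith [hderiv.unique (hasDerivAt_const s 1)]

lemma deriv_deriv_eq_curvA_smul_nuA {s : ℝ} (hγ' : DifferentiableAt ℝ (deriv γ) s)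
    (hunit : ∀ t, (deriv γ t).1 ^ 2 + (deriv γ t).2 ^ 2 = 1) :
    deriv (deriv γ) s = curvA γ s • nuA γ s := by
  have horth := innerP_deriv_deriv_eq_zero hγ' hunit
  have hs := hunit s
  simp only [innerP] at horth
  ext <;> simp only [curvA, innerP, nuA, Prod.smul_fst, Prod.smul_snd, smul_eq_mul]
  · linear_combination (deriv γ s).1 * horth - (deriv (deriv γ) s).1 * hs
  · linear_combination (deriv γ s).2 * horth - (deriv (deriv γ) s).2 * hs

lemma hasDerivAt_nuA {s : ℝ} (hγ' : DifferentiableAt ℝ (deriv γ) s)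
    (hunit : ∀ t, (deriv γ t).1 ^ 2 + (deriv γ t).2 ^ 2 = 1) :
    HasDerivAt (nuA γ) (-curvA γ s • deriv γ s) s := by
  have hx : HasDerivAt (fun t => (deriv γ t).1) (deriv (deriv γ) s).1 s := hγ'.hasDerivAt.fst
  have hy : HasDerivAt (fun t => (deriv γ t).2) (deriv (deriv γ) s).2 s := hγ'.hasDerivAt.snd
  have hν : HasDerivAt (nuA γ) ((deriv (deriv γ) s).2, -(deriv (deriv γ) s).1) s :=
    hy.prodMk hx.neg
  refine hν.congr_deriv ?_
  rw [deriv_deriv_eq_curvA_smul_nuA hγ' hunit]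
  ext <;> simp [nuA]

lemma norm_nuA_le_one (hunit : ∀ s, (deriv γ s).1 ^ 2 + (deriv γ s).2 ^ 2 = 1) (s : ℝ) :
    ‖nuA γ s‖ ≤ 1 := by
  have hnu : innerP (nuA γ s) (nuA γ s) = 1 := by
    rw [← hunit s, innerP, nuA]
    ring
  exact (sq_le_one_iff₀ (norm_nonneg _)).1 ((norm_sq_le_innerP_self _).trans_eq hnu)

lemma hasNormalCurvature_nuA_curvA (hγ : ContDiff ℝ 3 γ)
    (hunit : ∀ s, (deriv γ s).1 ^ 2 + (deriv γ s).2 ^ 2 = 1) :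
    HasNormalCurvature γ (nuA γ) (curvA γ) where
  differentiable := hγ.differentiable (by norm_num)
  differentiable_curvature :=
    (contDiff_curvA (n := 1) (hγ.of_le (by norm_num))).differentiable one_ne_zero
  norm_normal_le_one := norm_nuA_le_one hunit
  hasDerivAt_normal s :=
    hasDerivAt_nuA ((hγ.of_le (m := 1 + 1) (by norm_num)).deriv'.differentiable one_ne_zero s) hunit

lemma exists_deriv_curvA_eq_sub (hγ : Differentiable ℝ γ)
    (hκ' : Differentiable ℝ (deriv (curvA γ))) {S : ℝ}
    (hrot : ∀ s, -(deriv (deriv (curvA γ)) s) = 2 * S * innerP (deriv γ s) (γ s)) :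
    ∃ c, ∀ s, deriv (curvA γ) s = c - S * innerP (γ s) (γ s) := by
  have hderiv : ∀ s, HasDerivAt (fun t => deriv (curvA γ) t + S * innerP (γ t) (γ t)) 0 s := by
    intro s
    have hinner := hasDerivAt_innerP (hγ s).hasDerivAt (hγ s).hasDerivAt
    refine ((hκ' s).hasDerivAt.add (hinner.const_mul S)).congr_deriv ?_
    rw [innerP_comm (γ s)]
    linear_combination -hrot s
  exact ⟨_, fun s => eq_sub_of_add_eq (is_const_of_deriv_eq_zero
    (fun t => (hderiv t).differentiableAt) (fun t => (hderiv t).deriv) s 0)⟩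

end PlaneCurve

theorem proper_rotator_with_growth_is_line_general {γ : ℝ → ℝ × ℝ} (hγ : ContDiff ℝ 4 γ)
    (hunit : ∀ s, (deriv γ s).1 ^ 2 + (deriv γ s).2 ^ 2 = 1)
    (hlim : Tendsto γ atTop (Bornology.cobounded (ℝ × ℝ))) {S : ℝ}
    (hrot : ∀ s, -(deriv (deriv (curvA γ)) s) = 2 * S * innerP (deriv γ s) (γ s)) (s : ℝ) :
    γ s = γ 0 + s • deriv γ 0 := by
  have hdγ : Differentiable ℝ γ := hγ.differentiable (by norm_num)
  have hdγ' : Differentiable ℝ (deriv γ) :=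
    (ContDiff.deriv' (n := 3) (hγ.of_le (by norm_num))).differentiable (by norm_num)
  have hdκ' : Differentiable ℝ (deriv (curvA γ)) :=
    (contDiff_curvA (n := 1 + 1) (hγ.of_le (by norm_num))).deriv'.differentiable one_ne_zero
  obtain ⟨c, hc⟩ := exists_deriv_curvA_eq_sub hdγ hdκ' hrot
  have hκ : ∀ t, curvA γ t = 0 :=
    (hasNormalCurvature_nuA_curvA (hγ.of_le (by norm_num)) hunit).curvature_eq_zero_of_deriv_eq hlim
      (tendsto_innerP_self_cobounded_atTop.comp hlim) hc
  refine eq_add_smul_of_deriv_deriv_eq_zero hdγ hdγ' (fun t => ?_) s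
  rw [deriv_deriv_eq_curvA_smul_nuA (hdγ' t) hunit, hκ, zero_smul]

/-- a proper open rotator for the curve diffusion flow satisfying the
integral growth condition is a straight line. -/
theorem proper_rotator_with_growth_is_line
    (γ : ℝ → ℝ × ℝ)
    (hsmooth : ContDiff ℝ (⊤ : ℕ∞) γ)
    (hunit : ∀ s, (deriv γ s).1 ^ 2 + (deriv γ s).2 ^ 2 = 1)
    (hproper : ∀ C : Set (ℝ × ℝ), IsCompact C → IsCompact (γ ⁻¹' C))
    (S : ℝ)
    (hrot : ∀ s, -(deriv (deriv (curvA γ)) s) = 2 * S * innerP (deriv γ s) (γ s))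
    (hgrowth : Filter.Tendsto (fun ρ : ℝ =>
        (1 / ρ ^ 2) * (∫ s in γ ⁻¹' (euclBall ρ), (curvA γ s) ^ 2)
          + (|S| / ρ) * (∫ s in γ ⁻¹' (euclBall (2 * ρ)), |innerP (nuA γ s) (γ s)|))
      Filter.atTop (nhds 0)) :
    ∀ s, γ s = γ 0 + s • deriv γ 0 := by
  have hlim : Tendsto γ (cocompact ℝ) (cocompact (ℝ × ℝ)) :=
    (isProperMap_iff_tendsto_cocompact.1 <| isProperMap_iff_isCompact_preimage.2
      ⟨hsmooth.continuous, fun C => hproper C⟩).2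
  exact proper_rotator_with_growth_is_line_general (mod_cast contDiff_infty.1 hsmooth 4) hunit
    (Metric.cobounded_eq_cocompact (α := ℝ × ℝ) ▸ hlim.mono_left atTop_le_cocompact) hrot
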